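/- arXiv:2510.05009 — 2 statements merged into one kernel-verified Lean document; each statement's English description precedes it below -/
import Mathlib

section
/- Let q ∈ {0,…,n−1}, let ω be an open set in ℝⁿ, and let u : ω → ℝ be a C²-smooth function. Then (a) u is real q-convex on ω if and only if for every point p ∈ ω the real Hessian matrix H_u(p) = (∂²u/∂x_k∂x_l (p))_{k,l=1..n} has at most q negative eigenvalues (counted with multiplicity); and (b) u is strictly real q-convex on ω if and only if for every point p ∈ ω the real Hessian H_u(p) has at most q nonpositive eigenvalues (counted with multiplicity). -/
open Metric Set Filter

noncomputable section

/-- An upper semicontinuous function `u : ω → [−∞,+∞)` (EReal-valued, never `⊤` on `ω`)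
is *real q-convex* on `ω` if it satisfies the local maximum property with respect to
affine linear functions on real `(q+1)`-dimensional affine subspaces. -/
def RealQConvexOn {E : Type*} [NormedAddCommGroup E] [NormedSpace ℝ E]
    (q : ℕ) (u : E → EReal) (ω : Set E) : Prop :=
  (∀ x ∈ ω, u x ≠ ⊤) ∧ UpperSemicontinuousOn u ω ∧
    ∀ P : AffineSubspace ℝ E, Module.finrank ℝ P.direction = q + 1 →
      ∀ (c : E) (r : ℝ), 0 < r → closure (Metric.ball c r) ⊆ ω →
        ∀ l : E →ᵃ[ℝ] ℝ,
          (∀ x ∈ Metric.sphere c r ∩ (P : Set E), u x ≤ (l x : EReal)) →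
          ∀ x ∈ Metric.closedBall c r ∩ (P : Set E), u x ≤ (l x : EReal)
/-- The real Hessian matrix `(∂²u/∂x_k∂x_l (p))` of `u` at `p`. -/
def hessianMatrix {n : ℕ} (u : EuclideanSpace ℝ (Fin n) → ℝ)
    (p : EuclideanSpace ℝ (Fin n)) : Matrix (Fin n) (Fin n) ℝ :=
  Matrix.of fun k l =>
    iteratedFDeriv ℝ 2 u p ![EuclideanSpace.single k 1, EuclideanSpace.single l 1]

/-- A real symmetric matrix has at most `q` negative eigenvalues (with multiplicity). -/
def NegEigAtMost {n : ℕ} (A : Matrix (Fin n) (Fin n) ℝ) (q : ℕ) : Prop :=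
  ∃ hA : A.IsHermitian, Nat.card {i // hA.eigenvalues i < 0} ≤ q

/-- A real symmetric matrix has at most `q` nonpositive eigenvalues (with multiplicity). -/
def NonposEigAtMost {n : ℕ} (A : Matrix (Fin n) (Fin n) ℝ) (q : ℕ) : Prop :=
  ∃ hA : A.IsHermitian, Nat.card {i // hA.eigenvalues i ≤ 0} ≤ q

/-- `u` is *strictly real q-convex* on `ω` if around every point `p ∈ ω` the perturbations
`x ↦ u(x) + ε‖x-p‖²` stay real q-convex for all sufficiently small `ε` (of either sign). -/
def StrictlyRealQConvexOn {E : Type*} [NormedAddCommGroup E] [NormedSpace ℝ E]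
    (q : ℕ) (u : E → ℝ) (ω : Set E) : Prop :=
  ∀ p ∈ ω, ∃ U, IsOpen U ∧ p ∈ U ∧ U ⊆ ω ∧ ∃ ε₀ : ℝ, 0 < ε₀ ∧
    ∀ ε : ℝ, -ε₀ < ε → ε < ε₀ →
      RealQConvexOn q (fun x => ((u x + ε * ‖x - p‖ ^ 2 : ℝ) : EReal)) U

/-!
Both directions compare `u` with affine functions on a `(q + 1)`-dimensional affine subspace `P`.
If the Hessian at `p` is negative definite on a `(q + 1)`-dimensional subspace `V`, then by Taylor's
formula the tangent affine function of `u` at `p`, lowered by `c r²`, dominates `u` on the sphere of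
radius `r` in `p + V` but not at the centre `p`. Conversely, if the Hessian has at most `q` negative
eigenvalues then, for dimension reasons, every `P` contains a direction in which it is nonnegative;
once `u` is perturbed by `δ‖x - c‖²`, this rules out interior maxima of `u - l` on `P`.

Adding `ε‖x - p‖²` shifts the Hessian by `2ε`, so strict `q`-convexity says that the Hessian still
has at most `q` negative eigenvalues after a small negative shift, i.e. at most `q` nonpositive
ones. Eigenvalues are counted by the signature of the Hessian quadratic form, which is governed by
Sylvester's law of inertia.
-/

open Module Topology

section Signature

lemma exists_submodule_le_finrank_eq {K M : Type*} [DivisionRing K] [AddCommGroup M] [Module K M]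
    {V : Submodule K M} {k : ℕ} (hk : k ≤ finrank K V) : ∃ W ≤ V, finrank K W = k := by
  obtain ⟨f, hf⟩ := exists_linearIndependent_of_le_finrank hk
  refine ⟨(Submodule.span K (range f)).map V.subtype, Submodule.map_subtype_le V _, ?_⟩
  rw [Submodule.finrank_map_subtype_eq, finrank_span_eq_card hf, Fintype.card_fin]

variable {𝕜 M : Type*} [Field 𝕜] [LinearOrder 𝕜] [AddCommGroup M] [Module 𝕜 M]
  [FiniteDimensional 𝕜 M] {Q : QuadraticForm 𝕜 M}

lemma exists_finrank_eq_and_posDef_of_le_sigPos {k : ℕ} (hk : k ≤ sigPos Q) :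
    ∃ V : Submodule 𝕜 M, finrank 𝕜 V = k ∧ (Q.restrict V).PosDef := by
  obtain ⟨V, hV, hpos⟩ := exists_finrank_eq_sigPos_and_posDef Q
  obtain ⟨W, hWV, hW⟩ := exists_submodule_le_finrank_eq (hV ▸ hk)
  refine ⟨W, hW, fun x hx => hpos ⟨x, hWV x.2⟩ fun h => hx ?_⟩
  exact Submodule.coe_eq_zero.mp ((Submodule.mk_eq_zero ..).mp h)

variable [IsStrictOrderedRing 𝕜]

lemma exists_ne_zero_nonneg_of_sigNeg_lt_finrank {V : Submodule 𝕜 M}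
    (hV : sigNeg Q < finrank 𝕜 V) : ∃ w ∈ V, w ≠ 0 ∧ 0 ≤ Q w := by
  contrapose! hV
  exact le_sigNeg_of_negDef Q fun x hx =>
    neg_pos.mpr (hV x x.2 (Submodule.coe_eq_zero.not.mpr hx))

lemma exists_finrank_add_sigNeg_eq_and_nonneg (Q : QuadraticForm 𝕜 M) :
    ∃ W : Submodule 𝕜 M, finrank 𝕜 W + sigNeg Q = finrank 𝕜 M ∧ ∀ x ∈ W, 0 ≤ Q x := by
  have : Invertible (2 : 𝕜) := invertibleOfNonzero (NeZero.ne _)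
  obtain ⟨w, ⟨e⟩⟩ := Q.equivalent_weightedSumSquares
  let S : Set (Fin (finrank 𝕜 M)) := {i | 0 ≤ w i}
  refine ⟨(Pi.spanSubset 𝕜 S).map (e.toLinearEquiv.symm : _ →ₗ[𝕜] M), ?_, ?_⟩
  · have hS : Sᶜ = {i | w i < 0} := by ext; simp [S]
    rw [LinearEquiv.finrank_map_eq, Pi.dim_spanSubset,
      QuadraticForm.sigNeg_of_equiv_weightedSumSquares ⟨e⟩, ← hS, Set.ncard_add_ncard_compl,
      Nat.card_fin]
  · rintro _ ⟨y, hy, rfl⟩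
    change 0 ≤ Q (e.symm y)
    rw [e.symm.map_app y, QuadraticMap.weightedSumSquares_apply]
    refine Finset.sum_nonneg fun i _ => ?_
    by_cases hi : i ∈ S
    · exact mul_nonneg hi (mul_self_nonneg _)
    · simp [Pi.mem_spanSubset_iff.mp hy i hi]

end Signature

lemma exists_pos_mul_norm_sq_le_of_posDef {F : Type*} [NormedAddCommGroup F] [NormedSpace ℝ F]
    [FiniteDimensional ℝ F] {Q : QuadraticForm ℝ F} (hQ : Q.PosDef) :
    ∃ c > 0, ∀ v, c * ‖v‖ ^ 2 ≤ Q v := by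
  have hcont : Continuous Q := by
    have hQ' : ⇑Q = fun v => Q.associated.toContinuousBilinearMap v v :=
      funext fun v => (Q.associated_eq_self_apply ℝ v).symm
    rw [hQ']
    fun_prop
  rcases subsingleton_or_nontrivial F with hF | hF
  · exact ⟨1, one_pos, fun v => by simp [Subsingleton.elim v 0]⟩
  obtain ⟨v₀, hv₀, hmin⟩ := (isCompact_sphere (0 : F) 1).exists_isMinOn
    (NormedSpace.sphere_nonempty.mpr zero_le_one) hcont.continuousOn
  refine ⟨Q v₀, hQ v₀ (ne_zero_of_mem_unit_sphere ⟨v₀, hv₀⟩), fun v => ?_⟩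
  rcases eq_or_ne v 0 with rfl | hv
  · simp
  have hunit : ‖v‖⁻¹ • v ∈ sphere (0 : F) 1 := by simp [norm_smul, hv]
  calc Q v₀ * ‖v‖ ^ 2 ≤ Q (‖v‖⁻¹ • v) * ‖v‖ ^ 2 := by gcongr; exact hmin hunit
    _ = Q v := by rw [QuadraticMap.map_smul, smul_eq_mul]; field_simp

section Hessian

variable {E : Type*} [NormedAddCommGroup E] [NormedSpace ℝ E] {u : E → ℝ} {p w : E}

/-- The Hessian of `u` at `p` as the quadratic form `v ↦ D²u(p)(v, v)`: the coordinate-free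
counterpart of `hessianMatrix`. -/
def hessianForm (u : E → ℝ) (p : E) : QuadraticForm ℝ E :=
  LinearMap.BilinMap.toQuadraticMap (bilinearIteratedFDerivTwo ℝ u p)

lemma hessianForm_apply (u : E → ℝ) (p w : E) :
    hessianForm u p w = iteratedFDeriv ℝ 2 u p (fun _ => w) := by
  rw [hessianForm, LinearMap.BilinMap.toQuadraticMap_apply,
    bilinearIteratedFDerivTwo_eq_iteratedFDeriv]
  congr! 1
  ext i
  fin_cases i <;> rfl

lemma hessianForm_neg (u : E → ℝ) (p : E) : hessianForm (-u) p = -hessianForm u p := by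
  ext w
  simp [hessianForm_apply, iteratedFDeriv_neg_apply]

lemma hessianForm_sub_affineMap [FiniteDimensional ℝ E] (hu : ContDiffAt ℝ 2 u p)
    (l : E →ᵃ[ℝ] ℝ) : hessianForm (fun x => u x - l x) p = hessianForm u p := by
  let L : E →ᴬ[ℝ] ℝ := ⟨l, l.continuous_of_finiteDimensional⟩
  have hL : fderiv ℝ L = fun _ => L.contLinear := funext fun x => L.fderiv
  ext w
  change hessianForm (u - ⇑L) p w = hessianForm u p w
  rw [hessianForm_apply, iteratedFDeriv_sub_apply hu L.contDiff.contDiffAt, hessianForm_apply]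
  simp [iteratedFDeriv_two_apply, hL]

lemma deriv_deriv_comp_add_smul (hu : ContDiffAt ℝ 2 u p) (w : E) :
    deriv (deriv fun t : ℝ => u (p + t • w)) 0 = hessianForm u p w := by
  have hline : Tendsto (fun t : ℝ => p + t • w) (𝓝 0) (𝓝 p) :=
    Continuous.tendsto' (by fun_prop) _ _ (by simp)
  have hderiv : deriv (fun t : ℝ => u (p + t • w)) =ᶠ[𝓝 0]
      fun t => iteratedFDeriv ℝ 1 u (p + t • w) fun _ => w := by
    filter_upwards [hline.eventually (hu.eventually (by simp))] with t ht
    rw [(ht.differentiableAt two_ne_zero).deriv_comp_add_smul, iteratedFDeriv_one_apply]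
  rw [hderiv.deriv_eq, ContDiffAt.deriv_fderiv_add_smul (by simpa [one_add_one_eq_two] using hu),
    hessianForm_apply, zero_smul, add_zero]

lemma deriv_deriv_nonpos_of_isLocalMax {f : ℝ → ℝ} {x : ℝ} (hf : IsLocalMax f x)
    (hcont : ContinuousAt f x) : deriv (deriv f) x ≤ 0 := by
  by_contra! hpos
  -- `x` is now a local minimum as well, so `f` is locally constant.
  have hmin := isLocalMin_of_deriv_deriv_pos hpos hf.deriv_eq_zero hcont
  have hconst : f =ᶠ[𝓝 x] fun _ => f x := by
    filter_upwards [hf, hmin] with y hle hge using le_antisymm hle hge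
  simp [hconst.deriv.deriv_eq] at hpos

lemma hessianForm_nonpos_of_isLocalMax_line (hu : ContDiffAt ℝ 2 u p)
    (hmax : IsLocalMax (fun t : ℝ => u (p + t • w)) 0) : hessianForm u p w ≤ 0 := by
  rw [← deriv_deriv_comp_add_smul hu]
  refine deriv_deriv_nonpos_of_isLocalMax hmax (ContinuousAt.comp ?_ (by fun_prop))
  simpa using hu.continuousAt

lemma add_fderiv_add_half_le_of_le_hessianForm {K : ℝ}
    (hu : ∀ t ∈ Icc (0 : ℝ) 1, ContDiffAt ℝ 2 u (p + t • w))
    (hK : ∀ t ∈ Icc (0 : ℝ) 1, K ≤ hessianForm u (p + t • w) w) :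
    u p + fderiv ℝ u p w + K / 2 ≤ u (p + w) := by
  have htaylor := map_add_eq_sum_add_integral_iteratedFDeriv (n := 1) hu
  simp only [Nat.reduceAdd, Finset.sum_range_succ, Finset.range_one, Finset.sum_singleton,
    Nat.factorial_zero, Nat.factorial_one, Nat.cast_one, inv_one, one_mul, pow_one, smul_eq_mul,
    iteratedFDeriv_zero_apply, iteratedFDeriv_one_apply, ← hessianForm_apply] at htaylor
  have hcont : ContinuousOn (fun t : ℝ => hessianForm u (p + t • w) w) (Icc 0 1) := by
    intro t ht
    have hD := (hu t ht).continuousAt_iteratedFDeriv (k := 2) (by simp)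
    simp only [hessianForm_apply]
    exact (hD.comp (x := t) (by fun_prop)).continuousWithinAt.eval_const _
  have hhalf : ∫ t in (0 : ℝ)..1, (1 - t) * K = K / 2 := by
    rw [intervalIntegral.integral_mul_const,
      intervalIntegral.integral_comp_sub_left fun t : ℝ => t, integral_id]
    ring
  rw [htaylor, ← hhalf]
  gcongr
  refine intervalIntegral.integral_mono_on zero_le_one ?_ ?_ ?_
  · exact Continuous.intervalIntegrable (by fun_prop) _ _
  · exact ContinuousOn.intervalIntegrable_of_Icc zero_le_one (by fun_prop)
  · exact fun t ht => mul_le_mul_of_nonneg_left (hK t ht) (sub_nonneg.mpr ht.2)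

lemma eventually_forall_abs_hessianForm_sub_le (hu : ContDiffAt ℝ 2 u p) {ε : ℝ} (hε : 0 < ε) :
    ∀ᶠ x in 𝓝 p, ∀ v, |hessianForm u x v - hessianForm u p v| ≤ ε * ‖v‖ ^ 2 := by
  have hcont := hu.continuousAt_iteratedFDeriv (k := 2) (by simp)
  filter_upwards [Metric.continuousAt_iff'.mp hcont ε hε] with x hx v
  rw [dist_eq_norm] at hx
  have hop := (iteratedFDeriv ℝ 2 u x - iteratedFDeriv ℝ 2 u p).le_opNorm fun _ => v
  rw [sub_apply, ← hessianForm_apply, ← hessianForm_apply, Finset.prod_const, Finset.card_univ,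
    Fintype.card_fin, Real.norm_eq_abs] at hop
  exact hop.trans (by gcongr)

end Hessian

section PosDef

variable {E : Type*} [NormedAddCommGroup E] [NormedSpace ℝ E] [FiniteDimensional ℝ E]
  {u : E → ℝ} {p : E} {V : Submodule ℝ E}

lemma eventually_forall_mem_mul_norm_sq_le_hessianForm (hu : ContDiffAt ℝ 2 u p)
    (hV : ((hessianForm u p).restrict V).PosDef) :
    ∃ c > 0, ∀ᶠ x in 𝓝 p, ∀ v ∈ V, c * ‖v‖ ^ 2 ≤ hessianForm u x v := by
  obtain ⟨c, hc, hcV⟩ := exists_pos_mul_norm_sq_le_of_posDef hV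
  refine ⟨c / 2, half_pos hc, ?_⟩
  filter_upwards [eventually_forall_abs_hessianForm_sub_le hu (half_pos hc)] with x hx v hv
  have hp : c * ‖v‖ ^ 2 ≤ hessianForm u p v := hcV ⟨v, hv⟩
  linarith [neg_le_of_abs_le (hx v)]

lemma eventually_add_fderiv_add_mul_norm_sq_le (hu : ContDiffAt ℝ 2 u p)
    (hV : ((hessianForm u p).restrict V).PosDef) :
    ∃ c > 0, ∀ᶠ x in 𝓝 p, x - p ∈ V → u p + fderiv ℝ u p (x - p) + c * ‖x - p‖ ^ 2 ≤ u x := by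
  obtain ⟨c, hc, hcoercive⟩ := eventually_forall_mem_mul_norm_sq_le_hessianForm hu hV
  obtain ⟨ρ, hρ, hball⟩ := Metric.eventually_nhds_iff_ball.mp
    (hcoercive.and (hu.eventually (by simp)))
  refine ⟨c / 2, half_pos hc, ?_⟩
  filter_upwards [ball_mem_nhds p hρ] with x hx hxV
  have hseg (t : ℝ) (ht : t ∈ Icc (0 : ℝ) 1) : p + t • (x - p) ∈ ball p ρ :=
    (convex_ball p ρ).add_smul_sub_mem (mem_ball_self hρ) hx ht
  have htaylor := add_fderiv_add_half_le_of_le_hessianForm (fun t ht => (hball _ (hseg t ht)).2)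
    fun t ht => (hball _ (hseg t ht)).1 (x - p) hxV
  rwa [add_sub_cancel, mul_div_right_comm] at htaylor

end PosDef

section QuadraticPerturbation

variable {E : Type*} [NormedAddCommGroup E] [InnerProductSpace ℝ E] {u : E → ℝ} {x : E}

lemma contDiffAt_add_mul_norm_sub_sq (hu : ContDiffAt ℝ 2 u x) (ε : ℝ) (p : E) :
    ContDiffAt ℝ 2 (fun y => u y + ε * ‖y - p‖ ^ 2) x :=
  hu.add (contDiffAt_const.mul ((contDiffAt_id.sub contDiffAt_const).norm_sq ℝ))

lemma hessianForm_add_mul_norm_sub_sq (hu : ContDiffAt ℝ 2 u x) (ε : ℝ) (p w : E) :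
    hessianForm (fun y => u y + ε * ‖y - p‖ ^ 2) x w = hessianForm u x w + 2 * ε * ‖w‖ ^ 2 := by
  have hsq : ContDiff ℝ 2 fun y : E => ε * ‖y - p‖ ^ 2 :=
    contDiff_const.mul ((contDiff_id.sub contDiff_const).norm_sq ℝ)
  have hgrad : fderiv ℝ (fun y : E => ε * ‖y - p‖ ^ 2) =
      fun y => ((2 * ε) • innerSL ℝ) y - ((2 * ε) • innerSL ℝ) p := by
    ext y v
    have hy : HasFDerivAt (fun y => ε * ‖y - p‖ ^ 2) _ y :=
      ((hasFDerivAt_id y).sub_const p).norm_sq.const_mul ε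
    rw [hy.fderiv]
    simp
    ring
  change hessianForm (u + fun y => ε * ‖y - p‖ ^ 2) x w = _
  rw [hessianForm_apply, iteratedFDeriv_add_apply hu hsq.contDiffAt, add_apply,
    ← hessianForm_apply, iteratedFDeriv_two_apply, hgrad, fderiv_sub_const,
    ContinuousLinearMap.fderiv]
  exact congrArg (_ + 2 * ε * ·) (real_inner_self_eq_norm_sq w)

end QuadraticPerturbation

section MaximumPrinciple

lemma le_on_closedBall_of_exists_hessianForm_pos {E : Type*} [NormedAddCommGroup E]
    [NormedSpace ℝ E] [FiniteDimensional ℝ E] {v : E → ℝ} {P : AffineSubspace ℝ E} {c : E}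
    {r M : ℝ} (hcont : ContinuousOn v (closedBall c r)) (hv : ∀ x ∈ ball c r, ContDiffAt ℝ 2 v x)
    (hpos : ∀ x ∈ ball c r, x ∈ P → ∃ w ∈ P.direction, 0 < hessianForm v x w)
    (hM : ∀ x ∈ sphere c r ∩ P, v x ≤ M) {x : E} (hx : x ∈ closedBall c r ∩ P) : v x ≤ M := by
  have hcompact : IsCompact (closedBall c r ∩ (P : Set E)) :=
    (isCompact_closedBall c r).inter_right P.closed_of_finiteDimensional
  obtain ⟨y, ⟨hyr, hyP⟩, hmax⟩ := hcompact.exists_isMaxOn ⟨x, hx⟩ (hcont.mono inter_subset_left)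
  refine (hmax hx).trans ?_
  by_cases hy : y ∈ sphere c r
  · exact hM y ⟨hy, hyP⟩
  have hyball : y ∈ ball c r := by
    rw [← ball_union_sphere] at hyr
    exact hyr.resolve_right hy
  obtain ⟨w, hw, hpos⟩ := hpos y hyball hyP
  refine absurd (hessianForm_nonpos_of_isLocalMax_line (hv y hyball) ?_) hpos.not_ge
  have hline : Tendsto (fun t : ℝ => y + t • w) (𝓝 0) (𝓝 y) :=
    Continuous.tendsto' (by fun_prop) _ _ (by simp)
  filter_upwards [hline.eventually (isOpen_ball.mem_nhds hyball)] with t ht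
  have hP : y + t • w ∈ P := by
    simpa [add_comm] using P.vadd_mem_of_mem_direction (P.direction.smul_mem t hw) hyP
  simpa using hmax ⟨ball_subset_closedBall ht, hP⟩

lemma le_on_closedBall_of_exists_hessianForm_nonneg {E : Type*} [NormedAddCommGroup E]
    [InnerProductSpace ℝ E] [FiniteDimensional ℝ E] {v : E → ℝ}
    {P : AffineSubspace ℝ E} {c : E} {r M : ℝ} (hr : 0 < r)
    (hcont : ContinuousOn v (closedBall c r)) (hv : ∀ x ∈ ball c r, ContDiffAt ℝ 2 v x)
    (hnonneg : ∀ x ∈ ball c r, x ∈ P → ∃ w ∈ P.direction, w ≠ 0 ∧ 0 ≤ hessianForm v x w)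
    (hM : ∀ x ∈ sphere c r ∩ P, v x ≤ M) {x : E} (hx : x ∈ closedBall c r ∩ P) : v x ≤ M := by
  refine le_of_forall_pos_le_add fun ε hε => ?_
  have hstrict : v x + ε / r ^ 2 * ‖x - c‖ ^ 2 ≤ M + ε := by
    refine le_on_closedBall_of_exists_hessianForm_pos
      (v := fun y => v y + ε / r ^ 2 * ‖y - c‖ ^ 2) (by fun_prop)
      (fun y hy => contDiffAt_add_mul_norm_sub_sq (hv y hy) _ c) (fun y hy hyP => ?_)
      (fun y hy => ?_) hx
    · obtain ⟨w, hw, hw0, hw_nonneg⟩ := hnonneg y hy hyP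
      refine ⟨w, hw, ?_⟩
      rw [hessianForm_add_mul_norm_sub_sq (hv y hy)]
      have := norm_pos_iff.mpr hw0
      positivity
    · rw [mem_sphere_iff_norm.mp hy.1, div_mul_cancel₀ ε (by positivity)]
      gcongr
      exact hM y hy
  exact le_of_add_le_of_nonneg_left hstrict (by positivity)

end MaximumPrinciple

section Characterizations

lemma RealQConvexOn.sigNeg_hessianForm_le {E : Type*} [NormedAddCommGroup E] [NormedSpace ℝ E]
    [FiniteDimensional ℝ E] {q : ℕ} {u : E → ℝ} {ω : Set E} {p : E}
    (h : RealQConvexOn q (fun x => (u x : EReal)) ω) (hω : ω ∈ 𝓝 p) (hu : ContDiffAt ℝ 2 u p) :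
    sigNeg (hessianForm u p) ≤ q := by
  by_contra! hq
  obtain ⟨V, hV, hneg⟩ := exists_finrank_eq_and_posDef_of_le_sigPos (Q := -hessianForm u p) hq
  rw [← hessianForm_neg] at hneg
  obtain ⟨c, hc, hupper⟩ := eventually_add_fderiv_add_mul_norm_sq_le hu.neg hneg
  obtain ⟨r, hr, hball⟩ := Metric.nhds_basis_closedBall.eventually_iff.mp
    (hupper.and (eventually_mem_set.mpr hω))
  let l : E →ᵃ[ℝ] ℝ := (fderiv ℝ u p).toLinearMap.toAffineMap +
    AffineMap.const ℝ E (u p - fderiv ℝ u p p - c * r ^ 2)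
  have hl (x : E) : l x = u p + fderiv ℝ u p (x - p) - c * r ^ 2 := by
    simp [l]
    ring
  have hp : (u p : EReal) ≤ l p := by
    refine h.2.2 (AffineSubspace.mk' p V) (by rwa [AffineSubspace.direction_mk']) p r hr
      (fun x hx => (hball (closure_ball_subset_closedBall hx)).2) l ?_ p
      ⟨mem_closedBall_self hr.le, AffineSubspace.self_mem_mk' p V⟩
    rintro x ⟨hx, hxV⟩
    have hux := (hball (sphere_subset_closedBall hx)).1 (by simpa using hxV)
    rw [EReal.coe_le_coe_iff, hl]
    simp only [fderiv_fun_neg, neg_apply, mem_sphere_iff_norm.mp hx] at hux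
    linarith
  rw [EReal.coe_le_coe_iff, hl, sub_self, map_zero, add_zero] at hp
  linarith [show 0 < c * r ^ 2 by positivity]

variable {E : Type*} [NormedAddCommGroup E] [InnerProductSpace ℝ E] [FiniteDimensional ℝ E]
  {q : ℕ} {u : E → ℝ} {ω : Set E}

lemma realQConvexOn_of_sigNeg_hessianForm_le (hω : IsOpen ω) (hu : ContDiffOn ℝ 2 u ω)
    (h : ∀ p ∈ ω, sigNeg (hessianForm u p) ≤ q) : RealQConvexOn q (fun x => (u x : EReal)) ω := by
  refine ⟨fun x _ => EReal.coe_ne_top _,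
    (continuous_coe_real_ereal.comp_continuousOn hu.continuousOn).upperSemicontinuousOn,
    fun P hP c r hr hball l hl x hx => ?_⟩
  rw [closure_ball c hr.ne'] at hball
  have hlC : ContDiff ℝ 2 l := ContinuousAffineMap.contDiff ⟨l, l.continuous_of_finiteDimensional⟩
  have hu_at {y : E} (hy : y ∈ ball c r) : ContDiffAt ℝ 2 u y :=
    hu.contDiffAt (hω.mem_nhds (hball (ball_subset_closedBall hy)))
  rw [EReal.coe_le_coe_iff, ← sub_nonpos]
  refine le_on_closedBall_of_exists_hessianForm_nonneg (v := fun y => u y - l y) hr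
    ((hu.continuousOn.mono hball).sub hlC.continuous.continuousOn)
    (fun y hy => (hu_at hy).sub hlC.contDiffAt) (fun y hy _ => ?_)
    (fun y hy => sub_nonpos.mpr (EReal.coe_le_coe_iff.mp (hl y hy))) hx
  rw [hessianForm_sub_affineMap (hu_at hy)]
  refine exists_ne_zero_nonneg_of_sigNeg_lt_finrank ?_
  rw [hP]
  exact Nat.lt_succ_of_le (h y (hball (ball_subset_closedBall hy)))

lemma StrictlyRealQConvexOn.finrank_le_sigPos_hessianForm_add {p : E}
    (h : StrictlyRealQConvexOn q u ω) (hp : p ∈ ω) (hu : ContDiffAt ℝ 2 u p) :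
    finrank ℝ E ≤ sigPos (hessianForm u p) + q := by
  obtain ⟨U, hU, hpU, -, ε, hε, hconvex⟩ := h p hp
  have hneg := (hconvex (-(ε / 2)) (by linarith) (by linarith)).sigNeg_hessianForm_le
    (hU.mem_nhds hpU) (contDiffAt_add_mul_norm_sub_sq hu _ p)
  obtain ⟨W, hW, hnonneg⟩ := exists_finrank_add_sigNeg_eq_and_nonneg
    (hessianForm (fun x => u x + -(ε / 2) * ‖x - p‖ ^ 2) p)
  have hpos : ((hessianForm u p).restrict W).PosDef := by
    intro w hw
    have hw_nonneg := hnonneg w w.2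
    rw [hessianForm_add_mul_norm_sub_sq hu] at hw_nonneg
    have hw_norm : 0 < ε * ‖(w : E)‖ ^ 2 := by
      have : 0 < ‖w‖ := norm_pos_iff.mpr hw
      positivity
    rw [QuadraticMap.restrict_apply]
    linarith
  have := le_sigPos_of_posDef _ hpos
  omega

lemma strictlyRealQConvexOn_of_finrank_le_sigPos_hessianForm_add (hω : IsOpen ω)
    (hu : ContDiffOn ℝ 2 u ω) (h : ∀ p ∈ ω, finrank ℝ E ≤ sigPos (hessianForm u p) + q) :
    StrictlyRealQConvexOn q u ω := by
  intro p hp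
  have hu_at {x : E} (hx : x ∈ ω) : ContDiffAt ℝ 2 u x := hu.contDiffAt (hω.mem_nhds hx)
  obtain ⟨V, hV, hpos⟩ := exists_finrank_eq_sigPos_and_posDef (hessianForm u p)
  obtain ⟨c, hc, hcoercive⟩ := eventually_forall_mem_mul_norm_sq_le_hessianForm (hu_at hp) hpos
  obtain ⟨U, hU, hUopen, hpU⟩ := _root_.eventually_nhds_iff.mp
    (hcoercive.and (hω.eventually_mem hp))
  refine ⟨U, hUopen, hpU, fun x hx => (hU x hx).2, c / 2, half_pos hc, fun ε hε _ => ?_⟩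
  refine realQConvexOn_of_sigNeg_hessianForm_le hUopen (fun x hx =>
    (contDiffAt_add_mul_norm_sub_sq (hu_at (hU x hx).2) ε p).contDiffWithinAt) fun x hx => ?_
  have hnonneg : ∀ v ∈ V, (-hessianForm (fun y => u y + ε * ‖y - p‖ ^ 2) x) v ≤ 0 := by
    intro v hv
    rw [neg_apply, hessianForm_add_mul_norm_sub_sq (hu_at (hU x hx).2), neg_nonpos]
    nlinarith [(hU x hx).1 v hv, sq_nonneg ‖v‖]
  have hdim := QuadraticForm.sigPos_add_finrank_le_of_nonpos hnonneg
  rw [sigPos_neg] at hdim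
  have := h p hp
  omega

end Characterizations

section Spectral

open Matrix

variable {ι : Type*} [Fintype ι] [DecidableEq ι] {A : Matrix ι ι ℝ}

lemma toQuadraticForm'_equivalent_weightedSumSquares_eigenvalues (hA : A.IsHermitian) :
    A.toQuadraticForm'.Equivalent (QuadraticMap.weightedSumSquares ℝ hA.eigenvalues) := by
  let b := hA.eigenvectorBasis
  refine ⟨⟨(WithLp.linearEquiv 2 ℝ (ι → ℝ)).symm ≪≫ₗ b.repr.toLinearEquiv ≪≫ₗ
    WithLp.linearEquiv 2 ℝ (ι → ℝ), fun v => ?_⟩⟩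
  have hb (i : ι) : A *ᵥ v ⬝ᵥ b i = hA.eigenvalues i * v ⬝ᵥ b i := by
    rw [dotProduct_comm, dotProduct_mulVec, ← mulVec_transpose,
      ← conjTranspose_eq_transpose_of_trivial, hA.eq, hA.mulVec_eigenvectorBasis, smul_dotProduct,
      smul_eq_mul, dotProduct_comm]
  have hsum := b.sum_inner_mul_inner (WithLp.toLp 2 v) (WithLp.toLp 2 (A *ᵥ v))
  simp only [EuclideanSpace.inner_eq_star_dotProduct, star_trivial] at hsum
  suffices ∑ i, hA.eigenvalues i * (v ⬝ᵥ b i * v ⬝ᵥ b i) = v ⬝ᵥ A *ᵥ v by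
    simpa [toQuadraticForm', toLinearMap₂'_apply', QuadraticMap.weightedSumSquares_apply,
      b.repr_apply_apply, EuclideanSpace.inner_eq_star_dotProduct]
  rw [dotProduct_comm v, ← hsum]
  refine Finset.sum_congr rfl fun i _ => ?_
  rw [hb, dotProduct_comm]
  ring

end Spectral

section HessianMatrix

variable {n q : ℕ} {u : EuclideanSpace ℝ (Fin n) → ℝ} {p : EuclideanSpace ℝ (Fin n)}

lemma hessianMatrix_eq_toMatrix (u : EuclideanSpace ℝ (Fin n) → ℝ)
    (p : EuclideanSpace ℝ (Fin n)) : hessianMatrix u p = LinearMap.BilinForm.toMatrix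
      (EuclideanSpace.basisFun (Fin n) ℝ).toBasis (bilinearIteratedFDerivTwo ℝ u p) := by
  ext k l
  simp [hessianMatrix, LinearMap.BilinForm.toMatrix_apply,
    bilinearIteratedFDerivTwo_eq_iteratedFDeriv]

lemma hessianMatrix_isHermitian (hu : ContDiffAt ℝ 2 u p) : (hessianMatrix u p).IsHermitian := by
  ext k l
  rw [Matrix.conjTranspose_apply, star_trivial, hessianMatrix_eq_toMatrix,
    LinearMap.BilinForm.toMatrix_apply, LinearMap.BilinForm.toMatrix_apply]
  exact hu.isSymmSndFDerivAt (by simp) _ _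

lemma hessianForm_equivalent_toQuadraticForm'_hessianMatrix :
    (hessianForm u p).Equivalent (hessianMatrix u p).toQuadraticForm' := by
  refine ⟨⟨WithLp.linearEquiv 2 ℝ (Fin n → ℝ), fun v => ?_⟩⟩
  rw [hessianForm, LinearMap.BilinMap.toQuadraticMap_apply,
    LinearMap.BilinForm.apply_eq_dotProduct_toMatrix_mulVec
      (EuclideanSpace.basisFun (Fin n) ℝ).toBasis, ← hessianMatrix_eq_toMatrix]
  exact Matrix.toLinearMap₂'_apply' (hessianMatrix u p) v.ofLp v.ofLp

lemma hessianForm_equivalent_weightedSumSquares_eigenvalues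
    (hA : (hessianMatrix u p).IsHermitian) :
    (hessianForm u p).Equivalent (QuadraticMap.weightedSumSquares ℝ hA.eigenvalues) :=
  hessianForm_equivalent_toQuadraticForm'_hessianMatrix.trans
    (toQuadraticForm'_equivalent_weightedSumSquares_eigenvalues hA)

lemma negEigAtMost_hessianMatrix_iff (hu : ContDiffAt ℝ 2 u p) :
    NegEigAtMost (hessianMatrix u p) q ↔ sigNeg (hessianForm u p) ≤ q := by
  have hA := hessianMatrix_isHermitian hu
  rw [QuadraticForm.sigNeg_of_equiv_weightedSumSquares
    (hessianForm_equivalent_weightedSumSquares_eigenvalues hA)]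
  exact exists_prop_of_true hA

lemma nonposEigAtMost_hessianMatrix_iff (hu : ContDiffAt ℝ 2 u p) :
    NonposEigAtMost (hessianMatrix u p) q ↔
      finrank ℝ (EuclideanSpace ℝ (Fin n)) ≤ sigPos (hessianForm u p) + q := by
  have hA := hessianMatrix_isHermitian hu
  have hcard : {i | hA.eigenvalues i ≤ 0}.ncard + sigPos (hessianForm u p) = n := by
    rw [QuadraticForm.sigPos_of_equiv_weightedSumSquares
      (hessianForm_equivalent_weightedSumSquares_eigenvalues hA)]
    simpa [Set.compl_ofPred] using Set.ncard_add_ncard_compl {i | hA.eigenvalues i ≤ 0}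
  calc NonposEigAtMost (hessianMatrix u p) q ↔ {i | hA.eigenvalues i ≤ 0}.ncard ≤ q :=
        exists_prop_of_true hA
    _ ↔ finrank ℝ (EuclideanSpace ℝ (Fin n)) ≤ sigPos (hessianForm u p) + q := by
        rw [finrank_euclideanSpace_fin]
        omega

end HessianMatrix

theorem contDiffOn_realQConvexOn_iff_hessian_general {E : Type*} [NormedAddCommGroup E]
    [InnerProductSpace ℝ E] [FiniteDimensional ℝ E] {q : ℕ} {ω : Set E} (hω : IsOpen ω)
    {u : E → ℝ} (hu : ContDiffOn ℝ 2 u ω) :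
    (RealQConvexOn q (fun x => (u x : EReal)) ω ↔ ∀ p ∈ ω, sigNeg (hessianForm u p) ≤ q) ∧
    (StrictlyRealQConvexOn q u ω ↔
        ∀ p ∈ ω, finrank ℝ E ≤ sigPos (hessianForm u p) + q) := by
  have hu_at {p : E} (hp : p ∈ ω) : ContDiffAt ℝ 2 u p := hu.contDiffAt (hω.mem_nhds hp)
  exact ⟨⟨fun h _ hp => h.sigNeg_hessianForm_le (hω.mem_nhds hp) (hu_at hp),
      realQConvexOn_of_sigNeg_hessianForm_le hω hu⟩,
    ⟨fun h _ hp => h.finrank_le_sigPos_hessianForm_add hp (hu_at hp),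
      strictlyRealQConvexOn_of_finrank_le_sigPos_hessianForm_add hω hu⟩⟩

/-- A C²-smooth function on an open set `ω ⊆ ℝⁿ` is (strictly) real q-convex iff its real
Hessian has at most `q` negative (resp. nonpositive) eigenvalues at every point of `ω`. -/
theorem contDiffOn_realQConvexOn_iff_hessian {n q : ℕ} (hq : q < n)
    (ω : Set (EuclideanSpace ℝ (Fin n))) (hω : IsOpen ω)
    (u : EuclideanSpace ℝ (Fin n) → ℝ) (hu : ContDiffOn ℝ 2 u ω) :
    (RealQConvexOn q (fun x => (u x : EReal)) ω ↔
        ∀ p ∈ ω, NegEigAtMost (hessianMatrix u p) q) ∧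
    (StrictlyRealQConvexOn q u ω ↔
        ∀ p ∈ ω, NonposEigAtMost (hessianMatrix u p) q) := by
  have hu_at {p} (hp : p ∈ ω) : ContDiffAt ℝ 2 u p := hu.contDiffAt (hω.mem_nhds hp)
  rw [forall₂_congr fun p hp => negEigAtMost_hessianMatrix_iff (hu_at hp),
    forall₂_congr fun p hp => nonposEigAtMost_hessianMatrix_iff (hu_at hp)]
  exact contDiffOn_realQConvexOn_iff_hessian_general hω hu
end
end

section
/- Let Ω be an open subset of ℂⁿ, identified with an open subset of ℝ²ⁿ via z = x + iy ↦ (x,y), and let q ∈ {0,…,2n−1}. Then every function u : Ω → [−∞,+∞) that is real q-convex on Ω (as a subset of ℝ²ⁿ) is q-plurisubharmonic on Ω. -/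
open Metric Set Filter

noncomputable section

/-- A real-valued function is *pluriharmonic* on an open set `U` if it is locally
the real part of a holomorphic function. -/
def Pluriharmonic {E : Type*} [NormedAddCommGroup E] [NormedSpace ℂ E]
    (h : E → ℝ) (U : Set E) : Prop :=
  ∀ x ∈ U, ∃ V, IsOpen V ∧ x ∈ V ∧ V ⊆ U ∧
    ∃ F : E → ℂ, DifferentiableOn ℂ F V ∧ ∀ y ∈ V, h y = (F y).re

/-- An upper semicontinuous function `ψ : Ω → [−∞,+∞)` is *q-plurisubharmonic*
(in the sense of Hunt–Murray) if it satisfies the local maximum property with respect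
to pluriharmonic functions on complex `(q+1)`-dimensional affine subspaces. -/
def QPlurisubharmonicOn {E : Type*} [NormedAddCommGroup E] [NormedSpace ℂ E]
    (q : ℕ) (ψ : E → EReal) (Ω : Set E) : Prop :=
  (∀ z ∈ Ω, ψ z ≠ ⊤) ∧ UpperSemicontinuousOn ψ Ω ∧
    ∀ P : AffineSubspace ℂ E, Module.finrank ℂ P.direction = q + 1 →
      ∀ (c : E) (r : ℝ), 0 < r → closure (Metric.ball c r) ⊆ Ω →
        ∀ (h : E → ℝ) (U : Set E), IsOpen U → closure (Metric.ball c r) ⊆ U →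
          Pluriharmonic h U →
          (∀ z ∈ Metric.sphere c r ∩ (P : Set E), ψ z ≤ (h z : EReal)) →
          ∀ z ∈ Metric.closedBall c r ∩ (P : Set E), ψ z ≤ (h z : EReal)

/-!
Suppose the maximum principle fails for `u` against a pluriharmonic `h` on a ball in a complex
affine subspace `P` of dimension `q + 1`. Subtracting a small multiple of a function that is
quadratically convex along `P`, we find an interior maximum point `p` of `u - h + ε φ`. Locally
`h = Re F` with `F` holomorphic, and the second-order term of `F` along `P` is a complex quadratic
form `Q` in `q + 1` variables. In coordinates diagonalizing `Q`, its real part is nonpositive on the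
`(q + 1)`-dimensional real subspace of imaginary vectors. Along that subspace `u` therefore touches
a strictly concave quadratic function from below at `p`, which contradicts real `q`-convexity.

The Taylor expansion needs holomorphic maps of several variables to be `C²`. The Schwarz lemma
yields this without any integral formula: it makes the difference quotients of a holomorphic map
converge locally uniformly, and it shows that locally uniform limits of holomorphic maps are
holomorphic.
-/

section

open Module
open scoped Topology

/-! ### Holomorphic maps on normed spaces -/

section Holomorphic

variable {E G : Type*} [NormedAddCommGroup E] [NormedSpace ℂ E] [NormedAddCommGroup G]
  [NormedSpace ℂ G]

theorem norm_sub_sub_fderiv_le_of_mapsTo_ball {f : E → G} {c z : E} {r M : ℝ}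
    (hf : DifferentiableOn ℂ f (ball c r)) (hM : MapsTo f (ball c r) (closedBall (f c) M))
    (hz : z ∈ ball c r) :
    ‖f z - f c - fderiv ℂ f c (z - c)‖ ≤ 2 * M * (dist z c / r) ^ 2 := by
  have hr : 0 < r := nonempty_ball.mp ⟨z, hz⟩
  have hbound : MapsTo (fun w ↦ f w - fderiv ℂ f c (w - c)) (ball c r)
      (closedBall (f c - fderiv ℂ f c (c - c)) (2 * M)) := fun w hw ↦ by
    have hlin : ‖fderiv ℂ f c (w - c)‖ ≤ M := calc
      ‖fderiv ℂ f c (w - c)‖ ≤ M / r * r :=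
        (fderiv ℂ f c).le_of_opNorm_le_of_le
          (Complex.norm_fderiv_le_div_of_mapsTo_ball hf hM hr) (mem_ball_iff_norm.mp hw).le
      _ = M := div_mul_cancel₀ M hr.ne'
    rw [mem_closedBall_iff_norm, sub_self, map_zero, sub_zero, sub_right_comm, two_mul]
    exact (norm_sub_le _ _).trans (add_le_add (mem_closedBall_iff_norm.mp (hM hw)) hlin)
  have hlittle : (fun w ↦ f w - fderiv ℂ f c (w - c) - (f c - fderiv ℂ f c (c - c)))
      =o[𝓝 c] fun w ↦ ‖w - c‖ ^ 1 := by
    have := (hf.differentiableAt (ball_mem_nhds c hr)).hasFDerivAt.isLittleO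
    simpa [sub_right_comm] using this.norm_right
  have := Complex.dist_le_mul_div_pow_of_mapsTo_ball_of_isLittleO
    (hf.sub (by fun_prop)) hbound hlittle hz
  simpa [dist_eq_norm, sub_right_comm] using this

theorem norm_fderiv_le_of_forall_norm_le {f : E → G} {c : E} {r M : ℝ} (hr : 0 < r)
    (hf : DifferentiableOn ℂ f (ball c r)) (hM : ∀ z ∈ ball c r, ‖f z‖ ≤ M) :
    ‖fderiv ℂ f c‖ ≤ 2 * M / r := by
  refine Complex.norm_fderiv_le_div_of_mapsTo_ball hf (fun z hz ↦ ?_) hr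
  rw [mem_closedBall_iff_norm, two_mul]
  exact (norm_sub_le _ _).trans (add_le_add (hM z hz) (hM c (mem_ball_self hr)))

theorem uniformCauchySeqOn_fderiv {ι : Type*} {l : Filter ι} {f : ι → E → G} {c : E} {r : ℝ}
    (hr : 0 < r) (hf : ∀ᶠ n in l, DifferentiableOn ℂ (f n) (ball c (2 * r)))
    (hcauchy : UniformCauchySeqOn f l (ball c (2 * r))) :
    UniformCauchySeqOn (fun n ↦ fderiv ℂ (f n)) l (ball c r) := by
  intro u hu
  obtain ⟨ε, hε, hεu⟩ := Metric.mem_uniformity_dist.mp hu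
  filter_upwards [hcauchy _ (Metric.dist_mem_uniformity (show 0 < ε * r / 4 by positivity)),
    hf.prod_mk hf] with n hclose hdiff z hz
  have hsub : ball z r ⊆ ball c (2 * r) := ball_subset_ball' (by linarith [mem_ball.mp hz])
  have hdiffAt : ∀ i, DifferentiableOn ℂ (f i) (ball c (2 * r)) → DifferentiableAt ℂ (f i) z :=
    fun i hi ↦ hi.differentiableAt (isOpen_ball.mem_nhds (hsub (mem_ball_self hr)))
  refine hεu ?_
  calc dist (fderiv ℂ (f n.1) z) (fderiv ℂ (f n.2) z)
      = ‖fderiv ℂ (f n.1 - f n.2) z‖ := by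
        rw [dist_eq_norm, fderiv_sub (hdiffAt _ hdiff.1) (hdiffAt _ hdiff.2)]
    _ ≤ 2 * (ε * r / 4) / r :=
        norm_fderiv_le_of_forall_norm_le hr ((hdiff.1.sub hdiff.2).mono hsub) fun w hw ↦ by
          simpa [dist_eq_norm] using (hclose w (hsub hw)).le
    _ < ε := by field_simp; linarith

theorem differentiableOn_of_tendstoUniformlyOn [CompleteSpace G] {ι : Type*} {l : Filter ι}
    [l.NeBot] {f : ι → E → G} {g : E → G} {U : Set E} (hU : IsOpen U)
    (hf : ∀ᶠ n in l, DifferentiableOn ℂ (f n) U) (hfg : TendstoUniformlyOn f g l U) :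
    DifferentiableOn ℂ g U := by
  intro p hp
  obtain ⟨r, hr, hrU⟩ := Metric.isOpen_iff.mp hU p hp
  have hsub : ball p (2 * (r / 2)) ⊆ U := by rwa [mul_div_cancel₀ r two_ne_zero]
  have hball : ball p (r / 2) ∈ 𝓝 p := ball_mem_nhds p (half_pos hr)
  have hcauchy := uniformCauchySeqOn_fderiv (half_pos hr) (hf.mono fun n hn ↦ hn.mono hsub)
    (hfg.mono hsub).uniformCauchySeqOn
  have hexists : ∀ z ∈ ball p (r / 2), ∃ L, Tendsto (fun n ↦ fderiv ℂ (f n) z) l (𝓝 L) :=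
    fun z hz ↦ cauchy_map_iff_exists_tendsto.mp (hcauchy.cauchy_map hz)
  choose! g' hg' using hexists
  have hlim : TendstoUniformlyOnFilter (fun n ↦ fderiv ℂ (f n)) g' l (𝓝 p) :=
    (hcauchy.tendstoUniformlyOn_of_tendsto hg').tendstoUniformlyOnFilter.mono_right
      (le_principal_iff.mpr hball)
  suffices HasFDerivAt g (g' p) p from this.differentiableAt.differentiableWithinAt
  refine hasFDerivAt_of_tendstoUniformlyOnFilter (f := f) hlim ?_ ?_
  · filter_upwards [hf.prod_mk (hU.eventually_mem hp)] with n hn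
    exact (hn.1.differentiableAt (hU.mem_nhds hn.2)).hasFDerivAt
  · filter_upwards [hU.eventually_mem hp] with z hz using hfg.tendsto_at hz

theorem tendstoUniformlyOn_differenceQuotient {f : E → G} {p : E} {r M : ℝ} (hr : 0 < r)
    (hf : DifferentiableOn ℂ f (ball p (2 * r))) (hM : ∀ z ∈ ball p (2 * r), ‖f z‖ ≤ M) (v : E) :
    TendstoUniformlyOn (fun (t : ℂ) z ↦ t⁻¹ • (f (z + t • v) - f z)) (fun z ↦ fderiv ℂ f z v)
      (𝓝[≠] 0) (ball p r) := by
  rw [Metric.tendstoUniformlyOn_iff]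
  intro ε hε
  have hsmall : ∀ᶠ t : ℂ in 𝓝 0, ‖t • v‖ < r :=
    ContinuousAt.eventually_lt (by fun_prop) continuousAt_const (by simpa using hr)
  have herror : ∀ᶠ t : ℂ in 𝓝 0, 4 * M * ‖v‖ ^ 2 / r ^ 2 * ‖t‖ < ε :=
    ContinuousAt.eventually_lt (by fun_prop) continuousAt_const (by simpa using hε)
  filter_upwards [hsmall.filter_mono nhdsWithin_le_nhds, herror.filter_mono nhdsWithin_le_nhds,
    self_mem_nhdsWithin] with t htr htε ht0 z hz
  have ht : t ≠ 0 := ht0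
  have hsub : ball z r ⊆ ball p (2 * r) := ball_subset_ball' (by linarith [mem_ball.mp hz])
  have htaylor := norm_sub_sub_fderiv_le_of_mapsTo_ball (z := z + t • v) (M := 2 * M)
    (hf.mono hsub) (fun w hw ↦ by
      rw [mem_closedBall_iff_norm, two_mul]
      exact (norm_sub_le _ _).trans
        (add_le_add (hM w (hsub hw)) (hM z (hsub (mem_ball_self hr))))) (by simpa using htr)
  calc dist (fderiv ℂ f z v) (t⁻¹ • (f (z + t • v) - f z))
      = ‖t‖⁻¹ * ‖f (z + t • v) - f z - fderiv ℂ f z (z + t • v - z)‖ := by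
        rw [dist_comm, dist_eq_norm, ← norm_inv, ← norm_smul, add_sub_cancel_left, map_smul,
          smul_sub _ _ (t • _), inv_smul_smul₀ ht]
    _ ≤ ‖t‖⁻¹ * (2 * (2 * M) * (dist (z + t • v) z / r) ^ 2) := by gcongr
    _ = 4 * M * ‖v‖ ^ 2 / r ^ 2 * ‖t‖ := by
        have := norm_ne_zero_iff.mpr ht
        rw [dist_self_add_left, norm_smul]
        field_simp
        ring
    _ < ε := htε

theorem differentiableOn_fderiv_apply [CompleteSpace G] {f : E → G} {V : Set E} (hV : IsOpen V)
    (hf : DifferentiableOn ℂ f V) (v : E) : DifferentiableOn ℂ (fun z ↦ fderiv ℂ f z v) V := by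
  intro p hp
  obtain ⟨r, hr, hrV⟩ : ∃ r > 0, ∀ z ∈ ball p r, z ∈ V ∧ ‖f z‖ < ‖f p‖ + 1 :=
    Metric.eventually_nhds_iff_ball.mp <| (hV.eventually_mem hp).and <|
      (hf.differentiableAt (hV.mem_nhds hp)).continuousAt.norm.eventually_lt_const (lt_add_one _)
  have hsub : ball p (2 * (r / 2)) ⊆ ball p r := by rw [mul_div_cancel₀ r two_ne_zero]
  have hlim := tendstoUniformlyOn_differenceQuotient (half_pos hr)
    (hf.mono fun z hz ↦ (hrV z (hsub hz)).1) (fun z hz ↦ (hrV z (hsub hz)).2.le) v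
  have hsmall : ∀ᶠ t : ℂ in 𝓝[≠] 0, ‖t • v‖ < r / 2 :=
    (ContinuousAt.eventually_lt (by fun_prop) continuousAt_const
      (by simpa using hr)).filter_mono nhdsWithin_le_nhds
  refine ((differentiableOn_of_tendstoUniformlyOn isOpen_ball (hsmall.mono fun t ht z hz ↦ ?_)
    hlim).differentiableAt (ball_mem_nhds p (half_pos hr))).differentiableWithinAt
  have hdiff : ∀ w ∈ ball p r, DifferentiableAt ℂ f w := fun w hw ↦
    hf.differentiableAt (hV.mem_nhds (hrV w hw).1)
  have hshift : z + t • v ∈ ball p r := by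
    rw [mem_ball] at hz ⊢
    calc dist (z + t • v) p ≤ dist (z + t • v) z + dist z p := dist_triangle _ _ _
      _ < r := by rw [dist_self_add_left]; linarith
  have hz' : z ∈ ball p r := ball_subset_ball (half_le_self hr.le) hz
  exact ((((hdiff _ hshift).comp z (by fun_prop)).sub (hdiff z hz')).const_smul
    t⁻¹).differentiableWithinAt

theorem contDiffOn_of_differentiableOn_complex [FiniteDimensional ℂ E] [CompleteSpace G] {f : E → G}
    {V : Set E} (hV : IsOpen V) (hf : DifferentiableOn ℂ f V) (n : ℕ) : ContDiffOn ℂ n f V := by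
  induction n generalizing f with
  | zero => exact contDiffOn_zero.mpr hf.continuousOn
  | succ n ih =>
    refine contDiffOn_succ_of_fderiv_apply hf (absurd · (WithTop.natCast_ne_top n)) fun v ↦ ?_
    refine (ih (differentiableOn_fderiv_apply hV hf v)).congr fun z hz ↦ ?_
    rw [fderivWithin_of_isOpen hV hz]

end Holomorphic

/-! ### Second-order behaviour of holomorphic and pluriharmonic functions -/

theorem isLittleO_sub_sub_fderiv_sub_fderiv₂ {𝕜 E G : Type*} [RCLike 𝕜]
    [NormedAddCommGroup E] [NormedSpace 𝕜 E] [NormedAddCommGroup G] [NormedSpace 𝕜 G]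
    {f : E → G} {f' : E → E →L[𝕜] G} {f'' : E →L[𝕜] E →L[𝕜] G} {p : E}
    (hf : ∀ᶠ z in 𝓝 p, HasFDerivAt f (f' z) z) (hf' : HasFDerivAt f' f'' p) :
    (fun z ↦ f z - f p - f' p (z - p) - (2⁻¹ : 𝕜) • f'' (z - p) (z - p))
      =o[𝓝 p] fun z ↦ ‖z - p‖ ^ 2 := by
  let _ : NormedSpace ℝ E := NormedSpace.restrictScalars ℝ 𝕜 E
  obtain ⟨r, hr, hball⟩ := Metric.eventually_nhds_iff_ball.mp hf
  have hsymm : ∀ v w, f'' v w = f'' w v := second_derivative_symmetric_of_eventually hf hf'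
  -- Differentiating the remainder leaves the first-order remainder of `f'`.
  have hderiv : ∀ z ∈ ball p r,
      HasFDerivWithinAt (fun z ↦ f z - f' p (z - p) - (2⁻¹ : 𝕜) • f'' (z - p) (z - p))
        (f' z - f' p - f'' (z - p)) (ball p r) z := by
    intro z hz
    have hsub : HasFDerivAt (fun z ↦ z - p) (ContinuousLinearMap.id 𝕜 E) z :=
      hasFDerivAt_sub_const p
    have hquad := ((f''.hasFDerivAt.comp z hsub).clm_apply hsub).const_smul (2⁻¹ : 𝕜)
    refine ((((hball z hz).sub ((f' p).hasFDerivAt.comp z hsub)).sub hquad).congr_fderiv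
      ?_).hasFDerivWithinAt
    ext v
    simp [hsymm v, ← add_smul, ← two_mul]
  have hlittle : (fun z ↦ f' z - f' p - f'' (z - p)) =o[𝓝[ball p r] p] fun z ↦ ‖z - p‖ ^ 1 := by
    simpa only [pow_one] using (hf'.isLittleO.mono nhdsWithin_le_nhds).norm_right
  have := (convex_ball p r).isLittleO_pow_succ (mem_ball_self hr) hderiv hlittle
  rw [nhdsWithin_eq_nhds.mpr (ball_mem_nhds p hr)] at this
  simpa [sub_right_comm] using this

theorem exists_re_quadraticForm_nonpos {V : Type*} [AddCommGroup V] [Module ℂ V] [Module ℝ V]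
    [IsScalarTower ℝ ℂ V] [FiniteDimensional ℂ V] (Q : QuadraticForm ℂ V) :
    ∃ L : Submodule ℝ V, finrank ℝ L = finrank ℂ V ∧ ∀ v ∈ L, (Q v).re ≤ 0 := by
  classical
  obtain ⟨w, ⟨e⟩⟩ := Q.equivalent_weightedSumSquares
  let e' := e.trans (QuadraticForm.isometryEquivSumSquares w)
  -- `Q` is a sum of squares in suitable coordinates, hence nonpositive at imaginary ones.
  let J : (Fin (finrank ℂ V) → ℝ) →ₗ[ℝ] Fin (finrank ℂ V) → ℂ :=
    (LinearMap.toSpanSingleton ℝ ℂ Complex.I).compLeft _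
  have hJ : Function.Injective J := (smul_left_injective ℝ Complex.I_ne_zero).comp_left
  let f := (e'.symm.toLinearEquiv.toLinearMap.restrictScalars ℝ) ∘ₗ J
  have hf : Function.Injective f := e'.symm.toLinearEquiv.injective.comp hJ
  refine ⟨LinearMap.range f, ?_, ?_⟩
  · rw [LinearMap.finrank_range_of_inj hf, finrank_fin_fun]
  · rintro _ ⟨t, rfl⟩
    change (Q (e'.symm (J t))).re ≤ 0
    rw [e'.symm.map_app, QuadraticMap.weightedSumSquares_apply, Complex.re_sum]
    refine Finset.sum_nonpos fun i _ ↦ ?_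
    split_ifs <;> simp [J, mul_self_nonneg]

theorem exists_quadraticForm_isLittleO {E : Type*} [NormedAddCommGroup E] [NormedSpace ℂ E]
    [FiniteDimensional ℂ E] {F : E → ℂ} {V : Set E} (hV : IsOpen V)
    (hF : DifferentiableOn ℂ F V) {p : E} (hp : p ∈ V) :
    ∃ Q : QuadraticForm ℂ E,
      (fun z ↦ F z - F p - fderiv ℂ F p (z - p) - Q (z - p)) =o[𝓝 p] fun z ↦ ‖z - p‖ ^ 2 := by
  have hcont : ContDiffAt ℂ 2 F p :=
    (contDiffOn_of_differentiableOn_complex hV hF 2).contDiffAt (hV.mem_nhds hp)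
  have hF' : HasFDerivAt (fderiv ℂ F) (fderiv ℂ (fderiv ℂ F) p) p :=
    ((hcont.fderiv_right (m := 1) le_rfl).differentiableAt one_ne_zero).hasFDerivAt
  have hev : ∀ᶠ z in 𝓝 p, HasFDerivAt F (fderiv ℂ F z) z :=
    (hV.eventually_mem hp).mono fun z hz ↦ (hF.differentiableAt (hV.mem_nhds hz)).hasFDerivAt
  refine ⟨(2⁻¹ : ℂ) • LinearMap.BilinMap.toQuadraticMap
    (fderiv ℂ (fderiv ℂ F) p).toBilinForm, ?_⟩
  simpa using isLittleO_sub_sub_fderiv_sub_fderiv₂ hev hF'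

theorem exists_submodule_eventually_re_le {E : Type*} [NormedAddCommGroup E] [NormedSpace ℂ E]
    [FiniteDimensional ℂ E] {F : E → ℂ} {V : Set E} (hV : IsOpen V)
    (hF : DifferentiableOn ℂ F V) {p : E} (hp : p ∈ V) :
    ∃ L : Submodule ℝ E, finrank ℝ L = finrank ℂ E ∧ ∀ ε > 0, ∀ᶠ z in 𝓝 p, z - p ∈ L →
      (F z).re ≤ (F p).re + (fderiv ℂ F p (z - p)).re + ε * ‖z - p‖ ^ 2 := by
  obtain ⟨Q, hQ⟩ := exists_quadraticForm_isLittleO hV hF hp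
  obtain ⟨L, hrank, hL⟩ := exists_re_quadraticForm_nonpos Q
  refine ⟨L, hrank, fun ε hε ↦ ?_⟩
  filter_upwards [hQ.def hε] with z hz hzL
  have hre := (Complex.re_le_norm _).trans hz
  simp only [Complex.sub_re, norm_pow, norm_norm] at hre
  linarith [hL _ hzL]

theorem Pluriharmonic.continuousOn {E : Type*} [NormedAddCommGroup E]
    [NormedSpace ℂ E] {h : E → ℝ} {U : Set E} (hh : Pluriharmonic h U) : ContinuousOn h U := by
  intro x hx
  obtain ⟨V, hV, hxV, -, F, hF, hre⟩ := hh x hx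
  have hcont : ContinuousOn h V :=
    (Complex.continuous_re.comp_continuousOn hF.continuousOn).congr hre
  exact (hcont.continuousAt (hV.mem_nhds hxV)).continuousWithinAt

theorem Pluriharmonic.exists_submodule_eventually_le {E : Type*} [NormedAddCommGroup E]
    [NormedSpace ℂ E] {h : E → ℝ} {U : Set E} (hh : Pluriharmonic h U) {p : E} (hp : p ∈ U)
    (W : Submodule ℂ E) [FiniteDimensional ℂ W] :
    ∃ L ≤ W.restrictScalars ℝ, finrank ℝ L = finrank ℂ W ∧ ∃ A : E →ₗ[ℝ] ℝ,
      ∀ ε > 0, ∀ᶠ z in 𝓝 p, z - p ∈ L → h z ≤ h p + A (z - p) + ε * ‖z - p‖ ^ 2 := by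
  obtain ⟨V, hV, hpV, -, F, hF, hre⟩ := hh p hp
  have hslice : Differentiable ℂ fun w : W ↦ p + W.subtypeL w := by fun_prop
  have hmem : p + W.subtypeL 0 ∈ V := by simpa using hpV
  have hderiv : fderiv ℂ (fun w : W ↦ F (p + w)) 0 = (fderiv ℂ F p).comp W.subtypeL := by
    have hFp : HasFDerivAt F (fderiv ℂ F p) (p + W.subtypeL 0) := by
      simpa using (hF.differentiableAt (hV.mem_nhds hpV)).hasFDerivAt
    exact (hFp.comp 0 (W.subtypeL.hasFDerivAt.const_add p)).fderiv
  obtain ⟨L, hrank, hL⟩ := exists_submodule_eventually_re_le (hV.preimage hslice.continuous)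
    (hF.comp hslice.differentiableOn (mapsTo_preimage _ V)) hmem
  refine ⟨L.map (W.subtype.restrictScalars ℝ), ?_, ?_,
    Complex.reLm ∘ₗ (fderiv ℂ F p).toLinearMap.restrictScalars ℝ, fun ε hε ↦ ?_⟩
  · rintro _ ⟨w, -, rfl⟩
    exact w.2
  · rw [← hrank]
    exact (Submodule.equivMapOfInjective (W.subtype.restrictScalars ℝ) W.injective_subtype
      L).finrank_eq.symm
  · have hshift : Tendsto (fun z ↦ z - p) (𝓝 p) (𝓝 ((0 : W) : E)) :=
      (continuous_sub_right p).tendsto' p _ (sub_self p)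
    have hev := hL ε hε
    rw [nhds_subtype, eventually_comap] at hev
    filter_upwards [hshift.eventually hev, hV.eventually_mem hpV] with z hz hzV
    rintro ⟨w, hw, hwz⟩
    obtain rfl : z = p + w := eq_add_of_sub_eq' hwz.symm
    simpa [Function.comp_def, hderiv, hre _ hzV, hre _ hpV] using hz w hwz (by simpa using hw)

/-! ### Touching points -/

theorem RealQConvexOn.not_eventually_le {E : Type*} [NormedAddCommGroup E] [NormedSpace ℝ E]
    {q : ℕ} {u : E → EReal} {Ω : Set E} (hu : RealQConvexOn q u Ω) {p : E} (hp : Ω ∈ 𝓝 p)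
    {L : Submodule ℝ E} (hL : finrank ℝ L = q + 1) {a : ℝ} (ha : u p = a) (A : E →ₗ[ℝ] ℝ)
    {ε : ℝ} (hε : 0 < ε) :
    ¬ ∀ᶠ z in 𝓝 p, z - p ∈ L → u z ≤ ↑(a + A (z - p) - ε * ‖z - p‖ ^ 2) := by
  intro htouch
  obtain ⟨r, hr, hball⟩ := Metric.nhds_basis_closedBall.eventually_iff.mp (htouch.and hp)
  let l : E →ᵃ[ℝ] ℝ := A.toAffineMap.comp (AffineMap.id ℝ E -ᵥ AffineMap.const ℝ E p) +
    AffineMap.const ℝ E (a - ε * r ^ 2)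
  have hl : ∀ z, l z = a + A (z - p) - ε * r ^ 2 := fun z ↦ by
    change A (z - p) + (a - ε * r ^ 2) = a + A (z - p) - ε * r ^ 2
    ring
  have hle : u p ≤ l p := by
    refine hu.2.2 (AffineSubspace.mk' p L) (by rwa [AffineSubspace.direction_mk']) p r hr
      (closure_ball_subset_closedBall.trans fun z hz ↦ (hball hz).2) l ?_ p
      ⟨mem_closedBall_self hr.le, AffineSubspace.self_mem_mk' p L⟩
    rintro z ⟨hz, hzL⟩
    have := (hball (sphere_subset_closedBall hz)).1 (AffineSubspace.mem_mk'.mp hzL)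
    rwa [← dist_eq_norm, mem_sphere.mp hz, ← hl] at this
  rw [ha, hl, EReal.coe_le_coe_iff, sub_self, map_zero] at hle
  linarith [show 0 < ε * r ^ 2 by positivity]

theorem RealQConvexOn.not_eventually_le_pluriharmonic_sub {E : Type*} [NormedAddCommGroup E]
    [NormedSpace ℂ E] {q : ℕ} {u : E → EReal} {Ω : Set E} (hu : RealQConvexOn q u Ω) {p : E}
    (hΩ : Ω ∈ 𝓝 p) {h : E → ℝ} {U : Set E} (hh : Pluriharmonic h U) (hU : p ∈ U)
    {W : Submodule ℂ E} (hW : finrank ℂ W = q + 1) {φ : E → ℝ} {D : E →ₗ[ℝ] ℝ}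
    (hφ : ∀ z, z - p ∈ W → φ p + D (z - p) + ‖z - p‖ ^ 2 ≤ φ z) {a ε : ℝ} (ha : u p = a)
    (hε : 0 < ε) :
    ¬ ∀ᶠ z in 𝓝 p, z - p ∈ W → u z ≤ ↑(a + (h z - h p) - ε * (φ z - φ p)) := by
  intro htouch
  have : FiniteDimensional ℂ W := .of_finrank_pos (by omega)
  obtain ⟨L, hLW, hrank, A, hA⟩ := hh.exists_submodule_eventually_le hU W
  refine hu.not_eventually_le hΩ (hrank.trans hW) ha (A - ε • D) (half_pos hε) ?_
  filter_upwards [htouch, hA _ (half_pos hε)] with z hz hhz hzL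
  refine (hz (hLW hzL)).trans (EReal.coe_le_coe ?_)
  have hφz := mul_le_mul_of_nonneg_left (hφ z (hLW hzL)) hε.le
  simp only [LinearMap.sub_apply, LinearMap.smul_apply, smul_eq_mul]
  linarith [hhz hzL]

theorem exists_continuousLinearMap_norm_le {E : Type*} [NormedAddCommGroup E]
    [NormedSpace ℝ E] (W : Submodule ℝ E) [FiniteDimensional ℝ W] :
    ∃ T : E →L[ℝ] EuclideanSpace ℝ (Fin (finrank ℝ W)), ∀ v ∈ W, ‖v‖ ≤ ‖T v‖ := by
  obtain ⟨π, hπ⟩ := Submodule.ClosedComplemented.of_finiteDimensional W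
  let e : W ≃L[ℝ] EuclideanSpace ℝ (Fin (finrank ℝ W)) := toEuclidean
  obtain ⟨C, hC, hbound⟩ := e.symm.toContinuousLinearMap.bound
  refine ⟨C • e.toContinuousLinearMap.comp π, fun v hv ↦ ?_⟩
  simpa [norm_smul, abs_of_pos hC, hπ ⟨v, hv⟩] using hbound (e ⟨v, hv⟩)

theorem exists_quadratic_growth_along_submodule {E : Type*} [NormedAddCommGroup E]
    [NormedSpace ℝ E] (W : Submodule ℝ E) [FiniteDimensional ℝ W] :
    ∃ φ : E → ℝ, Continuous φ ∧ ∀ p, ∃ D : E →ₗ[ℝ] ℝ, ∀ z, z - p ∈ W →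
      φ p + D (z - p) + ‖z - p‖ ^ 2 ≤ φ z := by
  obtain ⟨T, hT⟩ := exists_continuousLinearMap_norm_le W
  refine ⟨fun z ↦ ‖T z‖ ^ 2, by fun_prop, fun p ↦
    ⟨(2 : ℝ) • (innerSL ℝ (T p) ∘L T).toLinearMap, fun z hz ↦ ?_⟩⟩
  calc ‖T p‖ ^ 2 + 2 * inner ℝ (T p) (T (z - p)) + ‖z - p‖ ^ 2
      ≤ ‖T p‖ ^ 2 + 2 * inner ℝ (T p) (T (z - p)) + ‖T (z - p)‖ ^ 2 := by
        gcongr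
        exact hT _ hz
    _ = ‖T z‖ ^ 2 := by rw [← norm_add_sq_real, ← map_add, add_sub_cancel]

theorem exists_touching_point {X : Type*} [TopologicalSpace X] {K : Set X} (hK : IsCompact K)
    {u : X → EReal} (hu : UpperSemicontinuousOn u K) (htop : ∀ z ∈ K, u z ≠ ⊤)
    (hbot : ∃ z ∈ K, u z ≠ ⊥) {g : X → ℝ} (hg : ContinuousOn g K) :
    ∃ p ∈ K, ∃ a : ℝ, u p = a ∧ ∀ z ∈ K, u z ≤ ↑(a + (g z - g p)) := by
  obtain ⟨z₀, hz₀, hbot₀⟩ := hbot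
  have husc : UpperSemicontinuousOn (fun z ↦ u z + ((-g z : ℝ) : EReal)) K :=
    hu.add' (continuous_coe_real_ereal.comp_continuousOn hg.neg).upperSemicontinuousOn
      fun z _ ↦ EReal.continuousAt_add (.inr (EReal.coe_ne_bot _)) (.inr (EReal.coe_ne_top _))
  obtain ⟨p, hp, hmax⟩ := husc.exists_isMaxOn ⟨z₀, hz₀⟩ hK
  have hpbot : u p ≠ ⊥ := fun h ↦ hbot₀ <| by simpa [h] using hmax hz₀
  lift u p to ℝ using ⟨htop p hp, hpbot⟩ with a ha
  refine ⟨p, hp, a, ha.symm, fun z hz ↦ ?_⟩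
  have hle : u z + ((-g z : ℝ) : EReal) ≤ u p + ((-g p : ℝ) : EReal) := hmax hz
  rw [← ha, ← EReal.coe_add,
    ← EReal.le_sub_iff_add_le (.inl (EReal.coe_ne_bot _)) (.inl (EReal.coe_ne_top _)),
    ← EReal.coe_sub] at hle
  exact hle.trans_eq (by ring_nf)

theorem exists_perturbed_touching_point {X : Type*} [TopologicalSpace X] {K S : Set X}
    (hK : IsCompact K) {u : X → EReal} (hu : UpperSemicontinuousOn u K)
    (htop : ∀ z ∈ K, u z ≠ ⊤) {h φ : X → ℝ} (hh : ContinuousOn h K) (hφ : ContinuousOn φ K)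
    (hS : ∀ z ∈ S, u z ≤ h z) {z₀ : X} (hz₀ : z₀ ∈ K) (hlt : h z₀ < u z₀) :
    ∃ ε > 0, ∃ p ∈ K \ S, ∃ a : ℝ, u p = a ∧
      ∀ z ∈ K, u z ≤ ↑(a + (h z - h p) - ε * (φ z - φ p)) := by
  obtain ⟨M, hM⟩ := hK.exists_bound_of_continuousOn hφ
  obtain ⟨b, hb⟩ : ∃ b : ℝ, u z₀ = b := ⟨_, (EReal.coe_toReal (htop z₀ hz₀) hlt.ne_bot).symm⟩
  rw [hb, EReal.coe_lt_coe_iff] at hlt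
  obtain ⟨ε, hε, hεM⟩ := exists_pos_mul_lt (sub_pos.mpr hlt) (2 * M)
  obtain ⟨p, hp, a, ha, hmax⟩ := exists_touching_point hK hu htop ⟨z₀, hz₀, by simp [hb]⟩
    (g := fun z ↦ h z - ε * φ z) (by fun_prop)
  refine ⟨ε, hε, p, ⟨hp, fun hpS ↦ ?_⟩, a, ha, fun z hz ↦ (hmax z hz).trans_eq (by ring_nf)⟩
  have hap := hS p hpS
  have hbz := hmax z₀ hz₀
  rw [ha, EReal.coe_le_coe_iff] at hap
  rw [hb, EReal.coe_le_coe_iff] at hbz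
  have hosc : ε * (φ p - φ z₀) ≤ ε * (2 * M) := by
    gcongr
    linarith [abs_le.mp (hM p hp), abs_le.mp (hM z₀ hz₀)]
  linarith

theorem isCompact_closedBall_inter_affineSubspace {𝕜 E : Type*} [NontriviallyNormedField 𝕜]
    [ProperSpace 𝕜] [NormedAddCommGroup E] [NormedSpace 𝕜 E] (P : AffineSubspace 𝕜 E)
    [FiniteDimensional 𝕜 P.direction] (c : E) (r : ℝ) :
    IsCompact (closedBall c r ∩ (P : Set E)) := by
  rcases (closedBall c r ∩ (P : Set E)).eq_empty_or_nonempty with hempty | ⟨p, hpB, hpP⟩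
  · exact hempty ▸ isCompact_empty
  have := FiniteDimensional.proper 𝕜 P.direction
  have hcompact : IsCompact ((fun w : P.direction ↦ (w : E) + p) '' closedBall 0 (r + r)) :=
    (isCompact_closedBall 0 (r + r)).image (by fun_prop)
  refine hcompact.of_isClosed_subset
    (isClosed_closedBall.inter P.closed_of_finiteDimensional) fun z ⟨hzB, hzP⟩ ↦ ?_
  refine ⟨⟨z - p, AffineSubspace.vsub_mem_direction hzP hpP⟩, ?_, sub_add_cancel z p⟩
  rw [mem_closedBall_zero_iff]
  change ‖z - p‖ ≤ r + r
  rw [← dist_eq_norm]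
  exact (dist_triangle_right z p c).trans (add_le_add hzB hpB)

theorem qPlurisubharmonicOn_of_realQConvexOn_general {E : Type*} [NormedAddCommGroup E]
    [NormedSpace ℂ E] {q : ℕ} {Ω : Set E} {u : E → EReal} (hu : RealQConvexOn q u Ω) :
    QPlurisubharmonicOn q u Ω := by
  refine ⟨hu.1, hu.2.1, fun P hP c r hr hΩ h U _ hU hh hle z₀ hz₀ ↦ ?_⟩
  rw [closure_ball c hr.ne'] at hΩ hU
  have : FiniteDimensional ℂ P.direction := .of_finrank_pos (by omega)
  have : FiniteDimensional ℝ (P.direction.restrictScalars ℝ) :=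
    FiniteDimensional.complexToReal P.direction
  obtain ⟨φ, hφ, hgrowth⟩ :=
    exists_quadratic_growth_along_submodule (P.direction.restrictScalars ℝ)
  by_contra! hlt
  obtain ⟨ε, hε, p, ⟨⟨hpB, hpP⟩, hpS⟩, a, ha, hmax⟩ := exists_perturbed_touching_point
    (isCompact_closedBall_inter_affineSubspace P c r)
    (hu.2.1.mono (inter_subset_left.trans hΩ)) (fun z hz ↦ hu.1 z (hΩ hz.1))
    (hh.continuousOn.mono (inter_subset_left.trans hU)) hφ.continuousOn hle hz₀ hlt
  have hball : ball c r ∈ 𝓝 p :=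
    isOpen_ball.mem_nhds (hpB.lt_of_ne fun hpr ↦ hpS ⟨hpr, hpP⟩)
  obtain ⟨D, hD⟩ := hgrowth p
  refine hu.not_eventually_le_pluriharmonic_sub
    (mem_of_superset hball (ball_subset_closedBall.trans hΩ)) hh (hU hpB) hP hD ha hε ?_
  filter_upwards [hball] with z hz hzP
  exact hmax z ⟨ball_subset_closedBall hz,
    (AffineSubspace.vsub_right_mem_direction_iff_mem hpP z).mp hzP⟩

end

/-- Every real q-convex function on an open set `Ω ⊆ ℂⁿ` (regarded as `ℝ²ⁿ` via the
underlying real structure) is q-plurisubharmonic on `Ω`. -/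
theorem qPlurisubharmonicOn_of_realQConvexOn {n q : ℕ} (hq : q < 2 * n)
    (Ω : Set (EuclideanSpace ℂ (Fin n))) (hΩ : IsOpen Ω)
    (u : EuclideanSpace ℂ (Fin n) → EReal)
    (hu : RealQConvexOn q u Ω) :
    QPlurisubharmonicOn q u Ω :=
  qPlurisubharmonicOn_of_realQConvexOn_general hu
end
end
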